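/- arXiv:2308.14209 — 4 statements merged into one kernel-verified Lean document; each statement's English description precedes it below -/
import Mathlib

section
/- Let p be a prime such that p − 1 is a power of 2 (i.e., p is a Fermat prime). Then there is no nontrivial difference set in the cyclic group ZMod p: every difference set D in the additive group ZMod p satisfies |D| ≤ 1 or |D| ≥ p − 1. -/
/-- A subset `D` of the additive group `ZMod p` is a difference set with parameter `lam`
(a positive integer) if every nonzero `g : ZMod p` has exactly `lam` representations
`g = d₂ - d₁` with `d₁, d₂ ∈ D`. -/
def IsDiffSetZMod (p : ℕ) (D : Finset (ZMod p)) (lam : ℕ) : Prop :=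
  0 < lam ∧ ∀ g : ZMod p, g ≠ 0 →
    ((D ×ˢ D).filter (fun x => x.2 - x.1 = g)).card = lam

/-!
Counting the pairs of distinct elements of `D` by their difference gives
`|D| (|D| - 1) = (|G| - 1) λ`. As `|D|` and `|D| - 1` are coprime, a prime power dividing
`|G| - 1` divides one of them, hence is at most `|D|` as soon as `|D| ≥ 2`.
-/

section AddGroup

variable {G : Type*} [AddGroup G] [DecidableEq G]

/-- Difference sets with parameter `lam` in an arbitrary additive group: every nonzero `g` has
exactly `lam` representations `g = d₂ - d₁` with `d₁, d₂ ∈ D`. Unlike in `IsDiffSetZMod`, the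
degenerate parameter `lam = 0` is allowed. -/
def IsDifferenceSet (D : Finset G) (lam : ℕ) : Prop :=
  ∀ g : G, g ≠ 0 → ((D ×ˢ D).filter (fun x => x.2 - x.1 = g)).card = lam

theorem offDiag_filter_sub_eq_of_ne_zero (D : Finset G) {g : G} (hg : g ≠ 0) :
    D.offDiag.filter (fun x => x.2 - x.1 = g) = (D ×ˢ D).filter (fun x => x.2 - x.1 = g) := by
  have ne_of_sub_eq (x : G × G) (hx : x.2 - x.1 = g) : x.1 ≠ x.2 :=
    (sub_ne_zero.mp (hx ▸ hg)).symm
  ext x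
  simp only [Finset.mem_filter, Finset.mem_offDiag, Finset.mem_product]
  grind

theorem IsDifferenceSet.card_mul_card_sub_one [Fintype G] {D : Finset G} {lam : ℕ}
    (hD : IsDifferenceSet D lam) :
    D.card * (D.card - 1) = (Fintype.card G - 1) * lam := by
  have sub_mapsTo : (D.offDiag : Set (G × G)).MapsTo (fun x => x.2 - x.1)
      (Finset.univ.erase (0 : G)) := fun x hx => by
    simpa [sub_eq_zero, eq_comm] using (Finset.mem_offDiag.mp hx).2.2
  calc D.card * (D.card - 1)
      = D.offDiag.card := by rw [Finset.offDiag_card, Nat.mul_sub_one]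
    _ = ∑ g ∈ Finset.univ.erase 0, (D.offDiag.filter (fun x => x.2 - x.1 = g)).card :=
        Finset.card_eq_sum_card_fiberwise sub_mapsTo
    _ = ∑ _ ∈ Finset.univ.erase (0 : G), lam := Finset.sum_congr rfl fun g hg => by
        have hg0 : g ≠ 0 := Finset.ne_of_mem_erase hg
        rw [offDiag_filter_sub_eq_of_ne_zero D hg0, hD g hg0]
    _ = (Fintype.card G - 1) * lam := by
        rw [Finset.sum_const, smul_eq_mul, Finset.card_erase_of_mem (Finset.mem_univ 0),
          Finset.card_univ]

end AddGroup

theorem prime_pow_dvd_or_dvd_of_coprime {q s a b : ℕ} (hq : q.Prime) (hab : a.Coprime b)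
    (h : q ^ s ∣ a * b) : q ^ s ∣ a ∨ q ^ s ∣ b := by
  rcases eq_or_ne s 0 with rfl | hs
  · exact Or.inl (one_dvd a)
  · exact (hab.isPrimePow_dvd_mul (hq.isPrimePow.pow hs)).mp h

theorem no_nontrivial_diff_set_fermat_general {G : Type*} [AddGroup G] [Fintype G] [DecidableEq G]
    {q s : ℕ} (hq : q.Prime) (hG : q ^ s ∣ Fintype.card G - 1)
    {D : Finset G} {lam : ℕ} (hD : IsDifferenceSet D lam) :
    D.card ≤ 1 ∨ q ^ s ≤ D.card := by
  refine or_iff_not_imp_left.mpr fun hcard => ?_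
  have hdvd : q ^ s ∣ D.card * (D.card - 1) :=
    hD.card_mul_card_sub_one ▸ hG.mul_right lam
  have hcop : D.card.Coprime (D.card - 1) :=
    (Nat.coprime_self_sub_right (by lia)).mpr (Nat.coprime_one_right _)
  rcases prime_pow_dvd_or_dvd_of_coprime hq hcop hdvd with h | h
  · exact Nat.le_of_dvd (by lia) h
  · exact (Nat.le_of_dvd (by lia) h).trans (Nat.sub_le _ 1)

/-- If `p` is a Fermat prime (i.e. `p - 1` is a power of `2`), then there is no nontrivial
difference set in the cyclic group `ZMod p`. -/
theorem no_nontrivial_diff_set_fermat (p : ℕ) (hp : p.Prime)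
    (hfermat : ∃ s : ℕ, p - 1 = 2 ^ s)
    (D : Finset (ZMod p)) (lam : ℕ) (hD : IsDiffSetZMod p D lam) :
    D.card ≤ 1 ∨ p - 1 ≤ D.card := by
  obtain ⟨s, hs⟩ := hfermat
  have : NeZero p := ⟨hp.ne_zero⟩
  exact hs ▸ no_nontrivial_diff_set_fermat_general Nat.prime_two
    (by rw [ZMod.card, hs]) hD.2
end

section
/- Let q > 3 be a prime such that p = 4q + 1 is also prime, and let D be a nontrivial difference set in the additive group ZMod p with 2·|D| < p. Then the set of multipliers of D, viewed as a subset of the unit group (ZMod p)ˣ, has cardinality 1 or q. -/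
/-!
The multipliers of `D` form a subgroup of the unit group, whose order is `4 * q` over `ZMod p`, so
it suffices that their number is odd, i.e. that `-1` is not a multiplier. If it were, some
reflection `x ↦ c - x` would preserve `D`, and `(x, y) ↦ (c - y, c - x)` would be an involution on
the representations `y - x` of each `g`. Its only possible fixed point is `(c - b, b)` with
`2 • b = g + c`, so the number of representations of `2 • b - c` is odd exactly when `b ∈ D`.
As this number does not depend on `b` once `2 • b ≠ c`, either `D` or its complement would have
at most one element.
-/

open Finset

section Involution

variable {α : Type*} [DecidableEq α] {s : Finset α} {f : α → α}

theorem even_card_filter_apply_ne_self (hf : ∀ x ∈ s, f x ∈ s) (hff : ∀ x ∈ s, f (f x) = x) :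
    Even #{x ∈ s | f x ≠ x} := by
  have hsum : ∑ x ∈ s with f x ≠ x, (1 : ZMod 2) = 0 :=
    sum_involution (fun x _ => f x) (fun _ _ => by decide) (fun x hx _ => (mem_filter.mp hx).2)
      (fun x hx => by
        obtain ⟨hxs, hne⟩ := mem_filter.mp hx
        exact mem_filter.mpr ⟨hf x hxs, by rwa [hff x hxs, ne_comm]⟩)
      (fun x hx => hff x (mem_filter.mp hx).1)
  simpa only [sum_const, nsmul_one, ZMod.natCast_eq_zero_iff_even] using hsum

theorem odd_card_iff_odd_card_filter_apply_eq_self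
    (hf : ∀ x ∈ s, f x ∈ s) (hff : ∀ x ∈ s, f (f x) = x) :
    Odd #s ↔ Odd #{x ∈ s | f x = x} := by
  rw [← card_filter_add_card_filter_not (s := s) (fun x => f x = x), Nat.odd_add]
  exact iff_true_right (even_card_filter_apply_ne_self hf hff)

end Involution

section Representations

/-- The representations of `g` as a difference `y - x` of elements of `D`, encoded as the pairs
`(x, y)`. The set `D` is a difference set when their number is the same for all `g ≠ 0`. -/
def differenceReps {G : Type*} [Sub G] [DecidableEq G] (D : Finset G) (g : G) : Finset (G × G) :=
  {x ∈ D ×ˢ D | x.2 - x.1 = g}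

theorem mem_differenceReps {G : Type*} [Sub G] [DecidableEq G] {D : Finset G} {g : G}
    {x : G × G} : x ∈ differenceReps D g ↔ (x.1 ∈ D ∧ x.2 ∈ D) ∧ x.2 - x.1 = g := by
  rw [differenceReps, mem_filter, mem_product]

variable {G : Type*} [AddCommGroup G] [DecidableEq G] {D : Finset G} {c : G}

theorem reflect_mem_differenceReps (hc : ∀ x ∈ D, c - x ∈ D) {g : G} {x : G × G}
    (hx : x ∈ differenceReps D g) : (c - x.2, c - x.1) ∈ differenceReps D g := by
  rw [mem_differenceReps] at hx ⊢
  exact ⟨⟨hc _ hx.1.2, hc _ hx.1.1⟩, by rw [sub_sub_sub_cancel_left, hx.2]⟩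

theorem filter_reflect_eq_self_differenceReps (h2 : Function.Injective fun x : G => 2 • x)
    (hc : ∀ x ∈ D, c - x ∈ D) (b : G) :
    {x ∈ differenceReps D (2 • b - c) | (c - x.2, c - x.1) = x} =
      if b ∈ D then {(c - b, b)} else ∅ := by
  have fixed_iff (x : G × G) :
      x.2 - x.1 = 2 • b - c ∧ (c - x.2, c - x.1) = x ↔ x = (c - b, b) := by
    constructor
    · rintro ⟨hdiff, hfix⟩
      have hx : x.1 = c - x.2 := (congrArg Prod.fst hfix).symm
      have hb : x.2 = b := h2 (by
        change 2 • x.2 = 2 • b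
        rw [← sub_left_inj (a := c), ← hdiff, hx, two_nsmul]
        abel)
      exact Prod.ext (by rw [hx, hb]) hb
    · rintro rfl
      exact ⟨by simp only [two_nsmul]; abel, by simp only [sub_sub_cancel]⟩
  ext x
  rw [mem_filter, mem_differenceReps, and_assoc, fixed_iff]
  split_ifs with hb
  · rw [mem_singleton, and_iff_right_iff_imp]
    rintro rfl
    exact ⟨hc b hb, hb⟩
  · simp only [notMem_empty, iff_false]
    rintro ⟨⟨-, hx⟩, rfl⟩
    exact hb hx

theorem odd_card_differenceReps_iff (h2 : Function.Injective fun x : G => 2 • x)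
    (hc : ∀ x ∈ D, c - x ∈ D) (b : G) : Odd #(differenceReps D (2 • b - c)) ↔ b ∈ D := by
  rw [odd_card_iff_odd_card_filter_apply_eq_self (f := fun x => (c - x.2, c - x.1))
      (fun _ => reflect_mem_differenceReps hc) (fun _ _ => by simp only [sub_sub_cancel]),
    filter_reflect_eq_self_differenceReps h2 hc b]
  split_ifs with hb <;> simp [hb]

theorem exists_sub_notMem_of_card_differenceReps (h2 : Function.Injective fun x : G => 2 • x)
    {lam : ℕ} (hlam : ∀ g ≠ 0, #(differenceReps D g) = lam)
    (hD : (D : Set G).Nontrivial) (hDc : (D : Set G)ᶜ.Nontrivial) (c : G) :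
    ∃ x ∈ D, c - x ∉ D := by
  by_contra! hc
  have exists_two_nsmul_sub_ne_zero {s : Set G} (hs : s.Nontrivial) : ∃ b ∈ s, 2 • b - c ≠ 0 := by
    obtain ⟨-, ⟨b, hb, rfl⟩, hbc⟩ := (hs.image h2).exists_ne c
    exact ⟨b, hb, sub_ne_zero.mpr hbc⟩
  obtain ⟨d, hd, hd0⟩ := exists_two_nsmul_sub_ne_zero hD
  obtain ⟨e, he, he0⟩ := exists_two_nsmul_sub_ne_zero hDc
  have hodd : Odd lam := hlam _ hd0 ▸ (odd_card_differenceReps_iff h2 hc d).mpr hd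
  exact he ((odd_card_differenceReps_iff h2 hc e).mp (hlam _ he0 ▸ hodd))

end Representations

theorem neg_one_mem_and_ne_one_of_even_card {R : Type*} [Ring R] [NoZeroDivisors R]
    {H : Subgroup Rˣ} [Finite H] (hH : Even (Nat.card H)) : -1 ∈ H ∧ (-1 : Rˣ) ≠ 1 := by
  have : Fact (Nat.Prime 2) := ⟨Nat.prime_two⟩
  obtain ⟨⟨t, ht⟩, horder⟩ := exists_prime_orderOf_dvd_card' 2 hH.two_dvd
  rw [Subgroup.orderOf_mk, orderOf_eq_prime_iff] at horder
  obtain ⟨hsq, hne⟩ := horder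
  have hinv : t⁻¹ = t := inv_eq_of_mul_eq_one_left (by rw [← sq, hsq])
  obtain rfl : t = -1 := ((Units.inv_eq_self_iff t).mp hinv).resolve_left hne
  exact ⟨ht, hne⟩

section MultiplierGroup

variable {R : Type*} [Ring R] [DecidableEq R]

/-- The group of multipliers of `D`: the units `t` for which `t * D` is a translate of `D`. -/
def multiplierGroup (D : Finset R) : Subgroup Rˣ where
  carrier := {t | ∃ g : R, D.image (fun d => (t : R) * d) = D.image (fun d => d + g)}
  one_mem' := ⟨0, by simp⟩
  mul_mem' := by
    rintro s t ⟨g, hg⟩ ⟨h, hh⟩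
    refine ⟨g + s * h, ?_⟩
    calc D.image (fun d => ((s * t : Rˣ) : R) * d)
        = (D.image (fun d => (t : R) * d)).image (fun d => (s : R) * d) := by
          simp only [image_image, Function.comp_def, Units.val_mul, mul_assoc]
      _ = (D.image (fun d => (s : R) * d)).image (fun d => d + s * h) := by
          simp only [hh, image_image, Function.comp_def, mul_add]
      _ = D.image (fun d => d + (g + s * h)) := by
          simp only [hg, image_image, Function.comp_def, add_assoc]
  inv_mem' := by
    rintro t ⟨g, hg⟩
    refine ⟨-(↑t⁻¹ * g), ?_⟩
    calc D.image (fun d => ((t⁻¹ : Rˣ) : R) * d)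
        = (D.image (fun d => d + g)).image (fun d => ↑t⁻¹ * d + -(↑t⁻¹ * g)) := by
          simp only [image_image, Function.comp_def, mul_add, add_neg_cancel_right]
      _ = D.image (fun d => d + -(↑t⁻¹ * g)) := by
          simp only [← hg, image_image, Function.comp_def, Units.inv_mul_cancel_left]

variable {D : Finset R}

theorem exists_sub_mem_of_neg_one_mem_multiplierGroup (h : -1 ∈ multiplierGroup D) :
    ∃ c, ∀ x ∈ D, c - x ∈ D := by
  obtain ⟨g, hg⟩ := h
  refine ⟨-g, fun x hx => ?_⟩
  obtain ⟨d, hd, hdx⟩ := mem_image.mp (hg ▸ mem_image_of_mem _ hx)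
  have hd_eq : -g - x = d := by
    rw [Units.val_neg, Units.val_one, neg_one_mul] at hdx
    rw [sub_eq_add_neg, ← hdx]
    abel
  rwa [hd_eq]

theorem odd_card_multiplierGroup [NoZeroDivisors R] [Finite R] {lam : ℕ}
    (hlam : ∀ g ≠ 0, #(differenceReps D g) = lam)
    (hD : (D : Set R).Nontrivial) (hDc : (D : Set R)ᶜ.Nontrivial) :
    Odd (Nat.card (multiplierGroup D)) := by
  by_contra heven
  obtain ⟨hmem, hne⟩ := neg_one_mem_and_ne_one_of_even_card (Nat.not_odd_iff_even.mp heven)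
  have h2 : (2 : R) ≠ 0 := fun h => hne (Units.ext (by
    rw [Units.val_neg, Units.val_one, neg_eq_iff_add_eq_zero, one_add_one_eq_two, h]))
  have two_nsmul_injective : Function.Injective fun x : R => 2 • x := fun x y hxy => by
    simpa only [nsmul_eq_mul, Nat.cast_ofNat, mul_right_inj' h2] using hxy
  obtain ⟨c, hc⟩ := exists_sub_mem_of_neg_one_mem_multiplierGroup hmem
  obtain ⟨x, hx, hcx⟩ := exists_sub_notMem_of_card_differenceReps two_nsmul_injective hlam hD hDc c
  exact hcx (hc x hx)

end MultiplierGroup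

theorem multiplier_group_card_general {F : Type*} [Field F] [DecidableEq F] {q k : ℕ}
    (hq : q.Prime) (hF : Nat.card F = 2 ^ k * q + 1) {D : Finset F} {lam : ℕ}
    (hlam : ∀ g ≠ 0, #(differenceReps D g) = lam) (hnt1 : 2 ≤ #D) (hnt2 : #D ≤ Nat.card F - 2) :
    Nat.card (multiplierGroup D) = 1 ∨ Nat.card (multiplierGroup D) = q := by
  have : Finite F := Nat.finite_of_card_ne_zero (hF ▸ Nat.succ_ne_zero _)
  have hD : (D : Set F).Nontrivial := one_lt_card_iff_nontrivial.mp hnt1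
  have hDc : (D : Set F)ᶜ.Nontrivial := by
    rw [← Set.one_lt_ncard_iff_nontrivial, Set.ncard_compl, Set.ncard_coe_finset]
    lia
  have hdvd : Nat.card (multiplierGroup D) ∣ 2 ^ k * q := by
    have hcard := (multiplierGroup D).card_subgroup_dvd_card
    rwa [Nat.card_units, hF, Nat.add_sub_cancel] at hcard
  have hcop : (Nat.card (multiplierGroup D)).Coprime (2 ^ k) :=
    (Nat.coprime_two_right.mpr (odd_card_multiplierGroup hlam hD hDc)).pow_right k
  exact (Nat.dvd_prime hq).mp (hcop.dvd_of_dvd_mul_left hdvd)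

/-- Let `q > 3` be a prime with `p = 4q + 1` also prime, and let `D` be a nontrivial
difference set in `ZMod p` with `2|D| < p`. Then the set of multipliers of `D`,
viewed as a subset of the unit group `(ZMod p)ˣ`, has cardinality `1` or `q`. -/
theorem multiplier_group_card (q p : ℕ) (hq : q.Prime) (hq3 : 3 < q)
    (hpdef : p = 4 * q + 1) (hp : p.Prime)
    (D : Finset (ZMod p)) (lam : ℕ) (hD : IsDiffSetZMod p D lam)
    (hnt1 : 2 ≤ D.card) (hnt2 : D.card ≤ p - 2) (hsmall : 2 * D.card < p) :
    {t : (ZMod p)ˣ | ∃ g : ZMod p,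
        D.image (fun d => (t : ZMod p) * d) = D.image (fun d => d + g)}.ncard = 1 ∨
    {t : (ZMod p)ˣ | ∃ g : ZMod p,
        D.image (fun d => (t : ZMod p) * d) = D.image (fun d => d + g)}.ncard = q := by
  have : Fact p.Prime := ⟨hp⟩
  exact multiplier_group_card_general (k := 2) hq (by rw [Nat.card_zmod, hpdef]; rfl) hD.2 hnt1
    (by rwa [Nat.card_zmod])
end

section
/- Let q > 3 be a prime such that p = 4q + 1 is also prime, and let H = {x⁴ : x ∈ (ZMod p)ˣ} be the subgroup of quartic residues of (ZMod p)ˣ. Then for every nonzero a ∈ ZMod p, the coset a·H (viewed as a subset of ZMod p) is not a difference set in the additive group ZMod p. -/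
/-!
Let `χ` be a character of order `4` of the finite field `F`, with values in `ℤ[i]`. The cosets of
the quartic residues are the nonzero level sets of `χ`. If one of them, `D`, is a difference set,
then `∑ χ²(y - x)` over `x, y ∈ D` is a multiple of `∑ χ² = 0`. Expanding the indicator function of
the level set in powers of `χ` turns this into `∑ i < 4, J(χⁱ, χ²) = 0`, and evaluating the four
Jacobi sums gives `Re J(χ, χ²) = 1`. As `J(χ, χ²)` has norm `|F| = 4q + 1`, its imaginary part
squares to `4q`, so that `q` is a square.
-/

open Finset

/-- A finite subset `D` of an additive group is a difference set with parameter `lam` if every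
nonzero `g` has exactly `lam` representations `g = y - x` with `x, y ∈ D`. The value `lam = 0` is
allowed here. -/
def IsDiffSet {G : Type*} [AddGroup G] [DecidableEq G] (D : Finset G) (lam : ℕ) : Prop :=
  ∀ g : G, g ≠ 0 → #{x ∈ D ×ˢ D | x.2 - x.1 = g} = lam

theorem IsDiffSet.sum_sum_sub {G M : Type*} [AddGroup G] [Fintype G] [DecidableEq G]
    [AddCommMonoid M] {D : Finset G} {lam : ℕ} (hD : IsDiffSet D lam) {f : G → M} (hf : f 0 = 0) :
    ∑ x ∈ D, ∑ y ∈ D, f (y - x) = lam • ∑ g, f g := by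
  have h_fiber (g : G) : ∑ z ∈ D ×ˢ D with z.2 - z.1 = g, f (z.2 - z.1) = lam • f g := by
    rw [sum_congr rfl fun z hz => congrArg f (mem_filter.mp hz).2, sum_const]
    obtain rfl | hg := eq_or_ne g 0
    · simp only [hf, smul_zero]
    · rw [hD g hg]
  calc ∑ x ∈ D, ∑ y ∈ D, f (y - x)
      = ∑ g, ∑ z ∈ D ×ˢ D with z.2 - z.1 = g, f (z.2 - z.1) := by
        rw [sum_fiberwise, sum_product]
    _ = lam • ∑ g, f g := by rw [smul_sum, sum_congr rfl fun g _ => h_fiber g]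

theorem map_eq_one_iff_exists_pow_orderOf {G H : Type*} [Group G] [IsCyclic G] [CommGroup H]
    (f : G →* H) {t : G} : f t = 1 ↔ ∃ u, t = u ^ orderOf f := by
  constructor
  · intro ht
    obtain ⟨g, hg⟩ := IsCyclic.exists_generator (α := G)
    obtain ⟨k, rfl⟩ := hg t
    have h_dvd : orderOf f ∣ orderOf (f g) := by
      refine orderOf_dvd_of_pow_eq_one (MonoidHom.ext fun u => ?_)
      obtain ⟨m, rfl⟩ := hg u
      rw [map_zpow, MonoidHom.pow_apply, pow_orderOf_eq_one, one_zpow, MonoidHom.one_apply]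
    rw [map_zpow, ← orderOf_dvd_iff_zpow_eq_one] at ht
    obtain ⟨j, rfl⟩ := (Int.natCast_dvd_natCast.mpr h_dvd).trans ht
    exact ⟨g ^ j, by simp only [mul_comm _ j, zpow_mul, zpow_natCast]⟩
  · rintro ⟨u, rfl⟩
    rw [map_pow, ← MonoidHom.pow_apply, pow_orderOf_eq_one, MonoidHom.one_apply]

section LevelSets

variable {M : Type*} [CommMonoid M]

theorem mulChar_apply_eq_apply_iff [IsCyclic Mˣ] {R : Type*} [CommMonoidWithZero R] [Nontrivial R]
    (χ : MulChar M R) {a x : M} (ha : IsUnit a) :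
    χ x = χ a ↔ ∃ u : Mˣ, x = a * (u : M) ^ orderOf χ := by
  obtain ⟨a, rfl⟩ := ha
  have h_ker (t : Mˣ) : χ t = 1 ↔ ∃ u : Mˣ, t = u ^ orderOf χ := by
    rw [← MulChar.coe_equivToUnitHom, Units.val_eq_one, map_eq_one_iff_exists_pow_orderOf,
      ← MulEquiv.orderOf_eq MulChar.mulEquivToUnitHom χ]
    rfl
  constructor
  · intro hx
    obtain ⟨x, rfl⟩ : IsUnit x :=
      MulChar.apply_ne_zero_iff.mp (hx ▸ MulChar.apply_ne_zero_iff.mpr a.isUnit)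
    have h_quot : χ ↑(a⁻¹ * x) = 1 := by
      rw [Units.val_mul, map_mul, hx, ← map_mul, Units.inv_mul, map_one]
    obtain ⟨u, hu⟩ := (h_ker _).mp h_quot
    exact ⟨u, by rw [← Units.val_pow_eq_pow_val, ← hu, ← Units.val_mul, mul_inv_cancel_left]⟩
  · rintro ⟨u, rfl⟩
    rw [map_mul, ← Units.val_pow_eq_pow_val, (h_ker _).mpr ⟨u, rfl⟩, mul_one]

variable {A R : Type*} [CommRing A] [Fintype A] [CommRing R]

theorem sum_apply_sub_levelSet [DecidableEq R] (χ ψ : MulChar A R) {x : A} (hx : IsUnit x) :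
    ∑ y with χ y = χ x, ψ (y - x) = ψ (-x) * ∑ t with χ t = 1, ψ (1 - t) := by
  obtain ⟨x, rfl⟩ := hx
  rw [sum_filter, ← Equiv.sum_comp x.mulLeft, sum_filter, mul_sum]
  refine sum_congr rfl fun t _ => ?_
  have h_sub : x * t - x = -x * (1 - t) := by ring
  have h_mem : χ (x * t) = χ x ↔ χ t = 1 := by
    rw [map_mul, (x.isUnit.map χ).mul_eq_left]
  rw [Units.mulLeft_apply, if_congr h_mem rfl rfl, h_sub, map_mul, mul_ite, mul_zero]

variable [IsDomain R]

theorem sum_range_pow_mulChar_apply [DecidableEq R] {χ : MulChar M R} {n : ℕ} (hχ : χ ^ n = 1)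
    (t : M) : ∑ i ∈ range n, (χ ^ i) t = if χ t = 1 then (n : R) else 0 := by
  by_cases ht : IsUnit t
  · obtain ⟨u, rfl⟩ := ht
    simp only [MulChar.pow_apply_coe]
    split_ifs with h
    · simp only [h, one_pow, sum_const, card_range, nsmul_one]
    · have h_geom := geom_sum_mul (χ u) n
      rw [← MulChar.pow_apply_coe, hχ, MulChar.one_apply_coe, sub_self] at h_geom
      exact (mul_eq_zero.mp h_geom).resolve_right (sub_ne_zero.mpr h)
  · simp only [MulChar.map_nonunit _ ht, sum_const_zero, zero_ne_one, if_false]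

theorem natCast_mul_sum_kernel_eq_sum_jacobiSum [DecidableEq R] {χ : MulChar A R} {n : ℕ}
    (hχ : χ ^ n = 1) (ψ : MulChar A R) :
    (n : R) * ∑ t with χ t = 1, ψ (1 - t) = ∑ i ∈ range n, jacobiSum (χ ^ i) ψ := by
  simp only [jacobiSum]
  rw [sum_comm, sum_filter, mul_sum]
  refine sum_congr rfl fun t _ => ?_
  rw [← sum_mul, sum_range_pow_mulChar_apply hχ, mul_ite, mul_zero, ite_mul, zero_mul]

theorem IsDiffSet.sum_jacobiSum_pow_eq_zero [Nontrivial A] [DecidableEq A] [DecidableEq R]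
    [CharZero R] {χ : MulChar A R} {n j lam : ℕ} {a : A} (hχ : χ ^ n = 1) (hj : χ ^ j ≠ 1)
    (ha : IsUnit a) (hD : IsDiffSet ({x | χ x = χ a} : Finset A) lam) :
    ∑ i ∈ range n, jacobiSum (χ ^ i) (χ ^ j) = 0 := by
  set S := ∑ t with χ t = 1, (χ ^ j) (1 - t) with S_def
  have hj0 : j ≠ 0 := by rintro rfl; exact hj (pow_zero χ)
  have h_inner (x : A) (hx : χ x = χ a) :
      ∑ y with χ y = χ a, (χ ^ j) (y - x) = (χ ^ j) (-a) * S := by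
    have hx_unit : IsUnit x :=
      MulChar.apply_ne_zero_iff.mp (hx ▸ MulChar.apply_ne_zero_iff.mpr ha)
    have h_neg : χ (-x) = χ (-a) := by
      rw [neg_eq_neg_one_mul, map_mul, hx, ← map_mul, neg_one_mul]
    rw [← hx, sum_apply_sub_levelSet χ _ hx_unit, χ.pow_apply' hj0 (-x), h_neg, ← χ.pow_apply' hj0]
  have h_total : (#{x | χ x = χ a} : R) * ((χ ^ j) (-a) * S) = 0 := by
    calc (#{x | χ x = χ a} : R) * ((χ ^ j) (-a) * S)
        = ∑ x with χ x = χ a, ∑ y with χ y = χ a, (χ ^ j) (y - x) := by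
          rw [sum_congr rfl fun x hx => h_inner x (mem_filter.mp hx).2, sum_const, nsmul_eq_mul]
      _ = 0 := by
          rw [hD.sum_sum_sub ((χ ^ j).map_nonunit not_isUnit_zero),
            MulChar.sum_eq_zero_of_ne_one hj, smul_zero]
  have h_card : (#{x | χ x = χ a} : R) ≠ 0 :=
    Nat.cast_ne_zero.mpr (card_ne_zero_of_mem (mem_filter.mpr ⟨mem_univ a, rfl⟩))
  have h_coeff : (χ ^ j) (-a) ≠ 0 := MulChar.apply_ne_zero_iff.mpr ha.neg
  have hS : S = 0 :=
    (mul_eq_zero.mp ((mul_eq_zero.mp h_total).resolve_left h_card)).resolve_left h_coeff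
  rw [← natCast_mul_sum_kernel_eq_sum_jacobiSum hχ, ← S_def, hS, mul_zero]

end LevelSets

theorem star_jacobiSum {A R : Type*} [CommRing A] [Fintype A] [CommRing R] [StarRing R]
    (χ ψ : MulChar A R) : star (jacobiSum χ ψ) = jacobiSum (star χ) (star ψ) :=
  (jacobiSum_ringHomComp χ ψ (starRingEnd R)).symm

section GaussianInt

theorem isPrimitiveRoot_gaussianInt_I : IsPrimitiveRoot (⟨0, 1⟩ : GaussianInt) 4 := by
  rw [IsPrimitiveRoot.iff (by norm_num)]
  refine ⟨by decide, fun l h_pos h_lt => ?_⟩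
  interval_cases l <;> decide

theorem star_mulChar_gaussianInt {A : Type*} [CommRing A] (χ : MulChar A GaussianInt) :
    star χ = χ⁻¹ := by
  refine eq_inv_of_mul_eq_one_left (MulChar.ext fun u => ?_)
  have h_norm : (χ u).norm = 1 :=
    (Zsqrtd.norm_eq_one_iff' (by norm_num) _).mpr (u.isUnit.map χ)
  rw [MulChar.mul_apply, MulChar.star_apply, mul_comm, ← Zsqrtd.norm_eq_mul_conj, h_norm,
    Int.cast_one, MulChar.one_apply_coe]

variable {F : Type*} [Field F] [Fintype F]

theorem norm_jacobiSum_gaussianInt {χ ψ : MulChar F GaussianInt} (hχ : χ ≠ 1) (hψ : ψ ≠ 1)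
    (hχψ : χ * ψ ≠ 1) : (jacobiSum χ ψ).norm = Fintype.card F := by
  have h_inj : Function.Injective GaussianInt.toComplex := fun _ _ => GaussianInt.toComplex_inj.mp
  have h_char : ringChar ℂ ≠ ringChar F := by
    rw [ringChar.eq_zero]
    exact (CharP.ringChar_ne_zero_of_finite F).symm
  have h_mul : jacobiSum χ ψ * jacobiSum χ⁻¹ ψ⁻¹ = (Fintype.card F : GaussianInt) := by
    apply h_inj
    rw [map_mul, map_natCast, ← jacobiSum_ringHomComp, ← jacobiSum_ringHomComp,
      ← MulChar.ringHomComp_inv, ← MulChar.ringHomComp_inv]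
    refine jacobiSum_mul_jacobiSum_inv h_char ((MulChar.ringHomComp_ne_one_iff h_inj).mpr hχ)
      ((MulChar.ringHomComp_ne_one_iff h_inj).mpr hψ) ?_
    rw [← MulChar.ringHomComp_mul]
    exact (MulChar.ringHomComp_ne_one_iff h_inj).mpr hχψ
  rw [← star_mulChar_gaussianInt, ← star_mulChar_gaussianInt, ← star_jacobiSum,
    ← Zsqrtd.norm_eq_mul_conj] at h_mul
  exact_mod_cast h_mul

theorem sum_jacobiSum_pow_sq_of_orderOf_eq_four {χ : MulChar F GaussianInt} (hχ : orderOf χ = 4) :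
    ∑ i ∈ range 4, jacobiSum (χ ^ i) (χ ^ 2)
      = jacobiSum χ (χ ^ 2) + star (jacobiSum χ (χ ^ 2)) - 2 := by
  have h_four : χ ^ 4 = 1 := hχ ▸ pow_orderOf_eq_one χ
  have h_sq : χ ^ 2 ≠ 1 := pow_ne_one_of_lt_orderOf two_ne_zero (by omega)
  have h_inv : χ⁻¹ = χ ^ 3 := inv_eq_of_mul_eq_one_right (by rw [← pow_succ', h_four])
  have h_sq_inv : (χ ^ 2)⁻¹ = χ ^ 2 := inv_eq_of_mul_eq_one_right (by rw [← pow_add, h_four])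
  have h_star : star (jacobiSum χ (χ ^ 2)) = jacobiSum (χ ^ 3) (χ ^ 2) := by
    rw [star_jacobiSum, star_mulChar_gaussianInt, star_mulChar_gaussianInt, h_inv, h_sq_inv]
  have h_neg_one : (χ ^ 2) (-1) = 1 := by
    rw [χ.pow_apply' two_ne_zero, ← map_pow, neg_one_sq, map_one]
  have h_sq_sq : jacobiSum (χ ^ 2) (χ ^ 2) = -1 := by
    simpa only [h_sq_inv, h_neg_one] using jacobiSum_nontrivial_inv h_sq
  simp only [sum_range_succ, range_zero, sum_empty, zero_add, pow_zero, pow_one,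
    jacobiSum_one_nontrivial h_sq, h_sq_sq, h_star]
  ring

theorem IsDiffSet.isSquare_of_orderOf_eq_four [DecidableEq F] {χ : MulChar F GaussianInt}
    {lam q : ℕ} {a : F} (hD : IsDiffSet ({x | χ x = χ a} : Finset F) lam) (hχ : orderOf χ = 4)
    (ha : a ≠ 0) (hF : Fintype.card F = 4 * q + 1) : IsSquare q := by
  have h_ne_one {k : ℕ} (h0 : k ≠ 0) (h4 : k < 4) : χ ^ k ≠ 1 :=
    pow_ne_one_of_lt_orderOf h0 (hχ ▸ h4)
  have h_one : χ ≠ 1 := pow_one χ ▸ h_ne_one one_ne_zero (by norm_num)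
  have h_sq : χ ^ 2 ≠ 1 := h_ne_one two_ne_zero (by norm_num)
  have h_cube : χ * χ ^ 2 ≠ 1 := pow_succ' χ 2 ▸ h_ne_one three_ne_zero (by norm_num)
  set J := jacobiSum χ (χ ^ 2)
  have h_sum : J + star J - 2 = 0 := by
    rw [← sum_jacobiSum_pow_sq_of_orderOf_eq_four hχ]
    exact hD.sum_jacobiSum_pow_eq_zero (hχ ▸ pow_orderOf_eq_one χ) h_sq ha.isUnit
  have h_re : J.re = 1 := by
    have h_re_sum : J.re + J.re - 2 = 0 := congrArg Zsqrtd.re h_sum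
    omega
  have h_im : J.im * J.im = 4 * q := by
    have h_norm : J.norm = 4 * q + 1 := by
      rw [norm_jacobiSum_gaussianInt h_one h_sq h_cube, hF]
      norm_cast
    rw [Zsqrtd.norm_def, h_re] at h_norm
    linarith
  have h_q : (q : ℚ) = J.im / 2 * (J.im / 2) := by
    have h_im_rat : (J.im * J.im : ℚ) = 4 * q := mod_cast h_im
    linarith
  exact Rat.isSquare_natCast_iff.mp ⟨_, h_q⟩

end GaussianInt

theorem quartic_residue_coset_not_diff_set_general {F : Type*} [Field F] [Fintype F]
    [DecidableEq F] {q : ℕ} (hq : ¬ IsSquare q) (hF : Fintype.card F = 4 * q + 1)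
    {a : F} (ha : a ≠ 0) {D : Finset F}
    (hD : (D : Set F) = {x : F | ∃ u : Fˣ, x = a * (u : F) ^ 4}) :
    ¬ ∃ lam : ℕ, IsDiffSet D lam := by
  rintro ⟨lam, hlam⟩
  obtain ⟨χ, hχ⟩ := MulChar.exists_mulChar_orderOf F (n := 4) ⟨q, by rw [hF, Nat.add_sub_cancel]⟩
    isPrimitiveRoot_gaussianInt_I
  have h_level : D = ({x | χ x = χ a} : Finset F) := by
    ext x
    rw [← mem_coe, hD, mem_filter_univ, mulChar_apply_eq_apply_iff χ ha.isUnit, hχ,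
      Set.mem_ofPred_eq]
  exact hq ((h_level ▸ hlam).isSquare_of_orderOf_eq_four hχ ha hF)

/-- Let `q > 3` be a prime with `p = 4q + 1` also prime, and let `H` be the subgroup of
quartic residues of `(ZMod p)ˣ`. Then for every nonzero `a : ZMod p`, the coset `a·H`
(viewed as a subset of `ZMod p`) is not a difference set in `ZMod p`. -/
theorem quartic_residue_coset_not_diff_set (q p : ℕ) (hq : q.Prime) (hq3 : 3 < q)
    (hpdef : p = 4 * q + 1) (hp : p.Prime)
    (a : ZMod p) (ha : a ≠ 0) (D : Finset (ZMod p))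
    (hDdef : (D : Set (ZMod p)) = {x : ZMod p | ∃ u : (ZMod p)ˣ, x = a * (u : ZMod p) ^ 4}) :
    ¬ ∃ lam : ℕ, IsDiffSetZMod p D lam := by
  have : Fact p.Prime := ⟨hp⟩
  rintro ⟨lam, -, hlam⟩
  exact quartic_residue_coset_not_diff_set_general (Nat.prime_iff.mp hq).irreducible.not_isSquare
    ((ZMod.card p).trans hpdef) ha hDdef ⟨lam, hlam⟩
end

section
/- Let p be an odd prime and let G be the dihedral group of order 2p with presentation ⟨a, b : a^p = b² = e, b a b = a⁻¹⟩. Let σ be the automorphism of G determined by σ(a) = a⁻¹ and σ(b) = b, let f : G → G be the permutation f(g) = σ(g)·b, and let ρ : G → G be the right translation ρ(g) = g·a. Then f ∘ f = id, f ∘ ρ = ρ ∘ f, and the subgroup K of Sym(G) generated by ρ and f is cyclic of order 2p and acts transitively (hence regularly) on G. -/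
open DihedralGroup

/-!
The reflection `b` is an involution, so `σ` is conjugation by `b`, as both maps agree on the
generators `a` and `b`. Hence `f g = (b * g * b⁻¹) * b = b * g`: the map `f` is *left* translation
by `b` and therefore commutes with the right translation `ρ`. Translations have the orders of the
elements they come from, so `ρ` and `f` have coprime orders `p` and `2`, and `ρ * f` generates `K`
and has order `2 * p`. Transitivity holds because every element of `G` has the form
`b ^ i * a ^ j = f ^ i (ρ ^ j 1)`.
-/

section CoprimeOrder

variable {G : Type*} [Group G] {x y : G}

theorem mem_zpowers_mul_of_coprime_orderOf (h : Commute x y)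
    (hxy : (orderOf x).Coprime (orderOf y)) : x ∈ Subgroup.zpowers (x * y) := by
  have hpow : (x * y) ^ orderOf y = x ^ orderOf y := by
    rw [h.mul_pow, pow_orderOf_eq_one, mul_one]
  have hx : x ∈ Subgroup.zpowers (x ^ orderOf y) := mem_zpowers_pow_iff.mpr hxy.symm
  exact Subgroup.zpowers_le.mpr (hpow ▸ Subgroup.npow_mem_zpowers (x * y) (orderOf y)) hx

theorem closure_pair_eq_zpowers_mul_of_coprime_orderOf (h : Commute x y)
    (hxy : (orderOf x).Coprime (orderOf y)) :
    Subgroup.closure {x, y} = Subgroup.zpowers (x * y) := by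
  apply le_antisymm
  · rw [Subgroup.closure_le, Set.pair_subset_iff]
    refine ⟨mem_zpowers_mul_of_coprime_orderOf h hxy, ?_⟩
    rw [h.eq]
    exact mem_zpowers_mul_of_coprime_orderOf h.symm hxy.symm
  · rw [Subgroup.zpowers_le]
    exact mul_mem (Subgroup.mem_closure_of_mem (by simp)) (Subgroup.mem_closure_of_mem (by simp))

end CoprimeOrder

section Translation

variable {G : Type*} [Group G]

theorem orderOf_mulLeft (a : G) : orderOf (Equiv.mulLeft a) = orderOf a := by
  simp [orderOf_eq_orderOf_iff, Equiv.ext_iff]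

theorem orderOf_mulRight (a : G) : orderOf (Equiv.mulRight a) = orderOf a := by
  simp [orderOf_eq_orderOf_iff, Equiv.ext_iff]

theorem commute_mulRight_mulLeft (a b : G) : Commute (Equiv.mulRight a) (Equiv.mulLeft b) :=
  Equiv.ext fun g ↦ mul_assoc b g a

theorem isPretransitive_closure_mulRight_mulLeft {a b : G}
    (hab : ∀ g : G, ∃ i j : ℤ, b ^ i * a ^ j = g) :
    MulAction.IsPretransitive (Subgroup.closure {Equiv.mulRight a, Equiv.mulLeft b}) G := by
  rw [MulAction.isPretransitive_iff_base 1]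
  intro g
  obtain ⟨i, j, rfl⟩ := hab g
  have ha : Equiv.mulRight a ∈ Subgroup.closure {Equiv.mulRight a, Equiv.mulLeft b} :=
    Subgroup.mem_closure_of_mem (by simp)
  have hb : Equiv.mulLeft b ∈ Subgroup.closure {Equiv.mulRight a, Equiv.mulLeft b} :=
    Subgroup.mem_closure_of_mem (by simp)
  exact ⟨⟨Equiv.mulLeft b ^ i * Equiv.mulRight a ^ j, mul_mem (zpow_mem hb i) (zpow_mem ha j)⟩,
    by simp [Subgroup.smul_def]⟩

end Translation

section Dihedral

variable {n : ℕ}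

theorem exists_sr_zero_zpow_mul_r_one_zpow_eq (g : DihedralGroup n) :
    ∃ i j : ℤ, sr 0 ^ i * r 1 ^ j = g := by
  rcases g with k | k
  · exact ⟨0, k.cast, by simp⟩
  · exact ⟨1, k.cast, by simp⟩

theorem dihedralGroup_hom_ext {M : Type*} [Monoid M] {φ ψ : DihedralGroup n →* M}
    (hr : φ (r 1) = ψ (r 1)) (hsr : φ (sr 0) = ψ (sr 0)) : φ = ψ := by
  ext g
  obtain ⟨i, j, rfl⟩ := exists_sr_zero_zpow_mul_r_one_zpow_eq g
  have hr_mem : r 1 ∈ φ.eqLocus ψ := hr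
  have hsr_mem : sr 0 ∈ φ.eqLocus ψ := hsr
  exact mul_mem (zpow_mem hsr_mem i) (zpow_mem hr_mem j)

theorem mulAut_eq_conj_sr_zero {σ : MulAut (DihedralGroup n)} (hr : σ (r 1) = (r 1)⁻¹)
    (hsr : σ (sr 0) = sr 0) : σ = MulAut.conj (sr 0) :=
  MulEquiv.toMonoidHom_injective <|
    dihedralGroup_hom_ext (by simp [hr]) (by simp [hsr])

end Dihedral

theorem dihedral_regular_cyclic_subgroup_general {n : ℕ} (hodd : Odd n)
    (σ : DihedralGroup n ≃* DihedralGroup n)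
    (hσa : σ (r 1) = (r 1)⁻¹) (hσb : σ (sr 0) = sr 0)
    (f ρ : Equiv.Perm (DihedralGroup n))
    (hf : ∀ g : DihedralGroup n, f g = σ g * sr 0)
    (hρ : ∀ g : DihedralGroup n, ρ g = g * r 1) :
    f * f = 1 ∧ f * ρ = ρ * f ∧
    IsCyclic (Subgroup.closure {ρ, f} : Subgroup (Equiv.Perm (DihedralGroup n))) ∧
    Nat.card (Subgroup.closure {ρ, f} : Subgroup (Equiv.Perm (DihedralGroup n))) = 2 * n ∧
    ∀ x y : DihedralGroup n, ∃ k ∈ Subgroup.closure {ρ, f}, k x = y := by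
  have hσ : σ = MulAut.conj (sr 0) := mulAut_eq_conj_sr_zero hσa hσb
  have hf_eq : f = Equiv.mulLeft (sr 0) := Equiv.ext fun g ↦ by
    rw [hf, hσ, MulAut.conj_apply, inv_mul_cancel_right, Equiv.coe_mulLeft]
  have hρ_eq : ρ = Equiv.mulRight (r 1) := Equiv.ext hρ
  have hρ_order : orderOf ρ = n := by rw [hρ_eq, orderOf_mulRight, orderOf_r_one]
  have hf_order : orderOf f = 2 := by rw [hf_eq, orderOf_mulLeft, orderOf_sr]
  have hcomm : Commute ρ f := hρ_eq ▸ hf_eq ▸ commute_mulRight_mulLeft (r 1) (sr 0)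
  have hcoprime : (orderOf ρ).Coprime (orderOf f) := by
    rw [hρ_order, hf_order]
    exact hodd.coprime_two_right
  have hK : Subgroup.closure {ρ, f} = Subgroup.zpowers (ρ * f) :=
    closure_pair_eq_zpowers_mul_of_coprime_orderOf hcomm hcoprime
  have htrans : MulAction.IsPretransitive (Subgroup.closure {ρ, f}) (DihedralGroup n) :=
    hρ_eq ▸ hf_eq ▸
      isPretransitive_closure_mulRight_mulLeft exists_sr_zero_zpow_mul_r_one_zpow_eq
  refine ⟨?_, hcomm.symm, hK ▸ inferInstance, ?_, fun x y ↦ ?_⟩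
  · rw [hf_eq, ← Equiv.mulLeft_mul, sr_mul_self, Equiv.mulLeft_one]
  · rw [hK, Nat.card_zpowers, hcomm.orderOf_mul_eq_mul_orderOf_of_coprime hcoprime, hρ_order,
      hf_order, mul_comm]
  · obtain ⟨k, hk⟩ := htrans.exists_smul_eq x y
    exact ⟨k, k.2, hk⟩

/-- Let `p` be an odd prime and `G = D_{2p}` the dihedral group of order `2p`, generated
by the rotation `a = r 1` and the reflection `b = sr 0`. Let `σ` be the automorphism of
`G` with `σ(a) = a⁻¹` and `σ(b) = b`, let `f : G → G` be the permutation
`f(g) = σ(g) * b`, and let `ρ` be the right translation `ρ(g) = g * a`. Then `f ∘ f = id`,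
`f ∘ ρ = ρ ∘ f`, and the subgroup `K ≤ Sym(G)` generated by `ρ` and `f` is cyclic of
order `2p` and acts transitively (hence regularly) on `G`. -/
theorem dihedral_regular_cyclic_subgroup (p : ℕ) (hp : p.Prime) (hodd : Odd p)
    (σ : DihedralGroup p ≃* DihedralGroup p)
    (hσa : σ (r 1) = (r 1)⁻¹) (hσb : σ (sr 0) = sr 0)
    (f ρ : Equiv.Perm (DihedralGroup p))
    (hf : ∀ g : DihedralGroup p, f g = σ g * sr 0)
    (hρ : ∀ g : DihedralGroup p, ρ g = g * r 1) :
    f * f = 1 ∧ f * ρ = ρ * f ∧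
    IsCyclic (Subgroup.closure {ρ, f} : Subgroup (Equiv.Perm (DihedralGroup p))) ∧
    Nat.card (Subgroup.closure {ρ, f} : Subgroup (Equiv.Perm (DihedralGroup p))) = 2 * p ∧
    ∀ x y : DihedralGroup p, ∃ k ∈ Subgroup.closure {ρ, f}, k x = y :=
  dihedral_regular_cyclic_subgroup_general hodd σ hσa hσb f ρ hf hρ
end
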